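/- arXiv:2201.09262 — 2 statements merged into one kernel-verified Lean document; each statement's English description precedes it below -/
import Mathlib

section
/- For all nonnegative integers a, b: ∫₀¹ arcsin^(2a+1)(x)/((2a+1)! · x) · arccos^(2b+1)(x)/(2b+1)! dx = T(a,b), where T(a,b) = t(2^a, 3, 2^b). -/
open Real

/-- `∑_{n < m₁ < ⋯ < m_b} 1/((2m₁+1)² ⋯ (2m_b+1)²)`; equals `1` when `b = 0`. -/
noncomputable def tTail (b n : ℕ) : ℝ :=
  ∑' f : {f : Fin b → ℕ // StrictMono f ∧ ∀ i, n < f i},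
    ∏ i, 1 / (2 * (f.1 i : ℝ) + 1) ^ 2

/-- `∑_{0 ≤ n₁ < ⋯ < n_a < n} 1/((2n₁+1)² ⋯ (2n_a+1)²)`; equals `1` when `a = 0`. -/
noncomputable def tHead (a n : ℕ) : ℝ :=
  ∑' f : {f : Fin a → ℕ // StrictMono f ∧ ∀ i, f i < n},
    ∏ i, 1 / (2 * (f.1 i : ℝ) + 1) ^ 2

/-- The multiple t-value `t(2,…,2,3,2,…,2)` with `a` twos before the `3` and `b` after. -/
noncomputable def T (a b : ℕ) : ℝ :=
  ∑' n : ℕ, (1 / (2 * (n : ℝ) + 1) ^ 3) * tHead a n * tTail b n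


/-! ### Combinatorial part -/

/-- The recursive form of the head sums. -/
noncomputable def hd : ℕ → ℕ → ℝ
  | 0, _ => 1
  | a + 1, n => ∑ m : Fin n, 1 / (2 * ((m : ℕ) : ℝ) + 1) ^ 2 * hd a m

lemma hd_nonneg (a n : ℕ) : 0 ≤ hd a n := by
  induction a generalizing n with
  | zero => simp [hd]
  | succ a ih =>
    rw [hd]
    exact Finset.sum_nonneg fun m _ => mul_nonneg (by positivity) (ih _)

lemma hd_succ (a n : ℕ) :
    hd (a + 1) (n + 1) = hd (a + 1) n + 1 / (2 * (n : ℝ) + 1) ^ 2 * hd a n := by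
  rw [hd, hd, Fin.sum_univ_castSucc]
  simp

lemma hd_bdd (a : ℕ) : ∃ C : ℝ, 0 ≤ C ∧ ∀ n, hd a n ≤ C := by
  have hs : Summable fun n : ℕ => 1 / (2 * (n : ℝ) + 1) ^ 2 := by
    have h := (Real.summable_one_div_nat_pow (p := 2)).2 (by norm_num)
    have h2 := (summable_nat_add_iff 1).2 h
    refine Summable.of_nonneg_of_le (fun n => by positivity) (fun n => ?_) h2
    push_cast
    gcongr
    have : (0:ℝ) ≤ n := n.cast_nonneg
    linarith
  induction a with
  | zero => exact ⟨1, by norm_num, fun n => by simp [hd]⟩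
  | succ a ih =>
    obtain ⟨C, hC, h⟩ := ih
    refine ⟨(∑' n : ℕ, 1 / (2 * (n : ℝ) + 1) ^ 2) * C,
      mul_nonneg (tsum_nonneg fun n => by positivity) hC, fun n => ?_⟩
    rw [hd, Fin.sum_univ_eq_sum_range (fun m : ℕ => 1 / (2 * (m : ℝ) + 1) ^ 2 * hd a m)]
    calc _ ≤ ∑ m ∈ Finset.range n, 1 / (2 * (m : ℝ) + 1) ^ 2 * C := by
          refine Finset.sum_le_sum fun m _ => ?_
          exact mul_le_mul_of_nonneg_left (h m) (by positivity)
      _ = (∑ m ∈ Finset.range n, 1 / (2 * (m : ℝ) + 1) ^ 2) * C := by rw [Finset.sum_mul]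
      _ ≤ _ := mul_le_mul_of_nonneg_right
          (hs.sum_le_tsum _ fun m _ => by positivity) hC

/-- Index set of the tail. -/
abbrev TI (b n : ℕ) := {f : Fin b → ℕ // StrictMono f ∧ ∀ i, n < f i}
/-- Index set of the head. -/
abbrev HI (a n : ℕ) := {f : Fin a → ℕ // StrictMono f ∧ ∀ i, f i < n}

/-- Adding a first element. -/
def tMap (b n : ℕ) (p : Σ j : ℕ, TI b (n + 1 + j)) : TI (b + 1) n :=
  ⟨Fin.cons (n + 1 + p.1) p.2.1, by
    obtain ⟨j, f, hf, hn⟩ := p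
    constructor
    · intro x y
      refine Fin.cases ?_ (fun x => ?_) x <;> refine Fin.cases ?_ (fun y => ?_) y
      · simp
      · intro _; simpa using hn y
      · simp
      · intro h; simpa using hf (Fin.succ_lt_succ_iff.1 h)
    · intro i
      refine Fin.cases ?_ (fun i => ?_) i
      · simp; omega
      · have := hn i
        simp; omega⟩

lemma tMap_bij (b n : ℕ) : Function.Bijective (tMap b n) := by
  constructor
  · rintro ⟨j, f⟩ ⟨j', f'⟩ h
    have h1 := congrArg Subtype.val h
    simp only [tMap] at h1
    have h0 := congrFun h1 0
    simp only [Fin.cons_zero] at h0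
    obtain rfl : j = j' := by omega
    have h2 := Fin.cons_right_injective (α := fun _ => ℕ) _ h1
    rw [Subtype.ext h2]
  · rintro ⟨f, hf, hn⟩
    have h0 := hn 0
    refine ⟨⟨f 0 - (n + 1), Fin.tail f, ?_, ?_⟩, ?_⟩
    · intro x y h
      exact hf (Fin.succ_lt_succ_iff.2 h)
    · intro i
      have : f 0 < f i.succ := hf (Fin.succ_pos i)
      simp only [Fin.tail]; omega
    · apply Subtype.ext
      simp only [tMap]
      have : n + 1 + (f 0 - (n + 1)) = f 0 := by omega
      rw [this, Fin.cons_self_tail]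

/-- Adding a last element. -/
def hMap (a n : ℕ) (p : Σ m : Fin n, HI a m) : HI (a + 1) n :=
  ⟨Fin.snoc (α := fun _ => ℕ) p.2.1 (p.1 : ℕ), by
    obtain ⟨j, f, hf, hn⟩ := p
    constructor
    · intro x y
      refine Fin.lastCases ?_ (fun x => ?_) x <;> refine Fin.lastCases ?_ (fun y => ?_) y
      · simp
      · intro h; exact absurd h (by simpa using (Fin.le_last _))
      · intro _; simpa using hn x
      · intro h; simpa using hf (by simpa using h)
    · intro i
      refine Fin.lastCases ?_ (fun i => ?_) i
      · simp
      · have := hn i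
        simp; omega⟩

lemma hMap_bij (a n : ℕ) : Function.Bijective (hMap a n) := by
  constructor
  · rintro ⟨j, f⟩ ⟨j', f'⟩ h
    have h1 := congrArg Subtype.val h
    simp only [hMap] at h1
    have h0 := congrFun h1 (Fin.last a)
    simp only [Fin.snoc_last] at h0
    obtain rfl : j = j' := Fin.ext h0
    have h2 : f.1 = f'.1 := by
      funext i
      simpa using congrFun h1 i.castSucc
    rw [Subtype.ext h2]
  · rintro ⟨f, hf, hn⟩
    refine ⟨⟨⟨f (Fin.last a), hn _⟩, Fin.init f, ?_, ?_⟩, ?_⟩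
    · intro x y h
      exact hf (by simpa using h)
    · intro i
      exact hf (Fin.castSucc_lt_last i)
    · apply Subtype.ext
      simp only [hMap]
      exact Fin.snoc_init_self f

lemma hasSum_head (a n : ℕ) :
    HasSum (fun f : HI a n => ∏ i, 1 / (2 * (f.1 i : ℝ) + 1) ^ 2) (hd a n) := by
  induction a generalizing n with
  | zero =>
    have : Unique (HI 0 n) :=
      { default := ⟨Fin.elim0, fun x => x.elim0, fun x => x.elim0⟩
        uniq := fun f => Subtype.ext (funext fun x => x.elim0) }
    simpa [hd] using hasSum_unique (fun f : HI 0 n => ∏ i, 1 / (2 * (f.1 i : ℝ) + 1) ^ 2)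
  | succ a ih =>
    rw [← (Equiv.ofBijective _ (hMap_bij a n)).hasSum_iff]
    have key : ∀ p : Σ m : Fin n, HI a m,
        ((fun f : HI (a+1) n => ∏ i, 1 / (2 * (f.1 i : ℝ) + 1) ^ 2) ∘
          (Equiv.ofBijective _ (hMap_bij a n))) p =
        1 / (2 * ((p.1 : ℕ) : ℝ) + 1) ^ 2 * ∏ i, 1 / (2 * (p.2.1 i : ℝ) + 1) ^ 2 := by
      intro p
      simp [hMap, Fin.prod_univ_castSucc, mul_comm]
    rw [show ((fun f : HI (a+1) n => ∏ i, 1 / (2 * (f.1 i : ℝ) + 1) ^ 2) ∘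
          (Equiv.ofBijective _ (hMap_bij a n))) = _ from funext key]
    have hf : ∀ m : Fin n, HasSum (fun f : HI a m => 1 / (2 * ((m : ℕ) : ℝ) + 1) ^ 2 *
        ∏ i, 1 / (2 * (f.1 i : ℝ) + 1) ^ 2) (1 / (2 * ((m : ℕ) : ℝ) + 1) ^ 2 * hd a m) :=
      fun m => (ih m).mul_left _
    have hs : HasSum (fun m : Fin n => 1 / (2 * ((m : ℕ) : ℝ) + 1) ^ 2 * hd a m)
        (hd (a + 1) n) := by
      rw [hd]; exact hasSum_fintype _
    refine HasSum.sigma_of_hasSum hs hf ?_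
    rw [summable_sigma_of_nonneg (fun p => by positivity)]
    refine ⟨fun m => (hf m).summable, ?_⟩
    simpa only [(hf _).tsum_eq] using hs.summable

lemma hasSum_tail (k : ℕ → ℕ → ℝ) (k0 : ∀ n, k 0 n = 1)
    (ks : ∀ b n, HasSum (fun j : ℕ => 1 / (2 * ((n + 1 + j : ℕ) : ℝ) + 1) ^ 2 * k b (n + 1 + j))
      (k (b + 1) n)) (b n : ℕ) :
    HasSum (fun f : TI b n => ∏ i, 1 / (2 * (f.1 i : ℝ) + 1) ^ 2) (k b n) := by
  induction b generalizing n with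
  | zero =>
    have : Unique (TI 0 n) :=
      { default := ⟨Fin.elim0, fun x => x.elim0, fun x => x.elim0⟩
        uniq := fun f => Subtype.ext (funext fun x => x.elim0) }
    simpa [k0] using hasSum_unique (fun f : TI 0 n => ∏ i, 1 / (2 * (f.1 i : ℝ) + 1) ^ 2)
  | succ b ih =>
    rw [← (Equiv.ofBijective _ (tMap_bij b n)).hasSum_iff]
    have key : ∀ p : Σ j : ℕ, TI b (n + 1 + j),
        ((fun f : TI (b+1) n => ∏ i, 1 / (2 * (f.1 i : ℝ) + 1) ^ 2) ∘
          (Equiv.ofBijective _ (tMap_bij b n))) p =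
        1 / (2 * ((n + 1 + p.1 : ℕ) : ℝ) + 1) ^ 2 * ∏ i, 1 / (2 * (p.2.1 i : ℝ) + 1) ^ 2 := by
      intro p
      simp [tMap, Fin.prod_univ_succ, mul_comm]
    rw [show ((fun f : TI (b+1) n => ∏ i, 1 / (2 * (f.1 i : ℝ) + 1) ^ 2) ∘
          (Equiv.ofBijective _ (tMap_bij b n))) = _ from funext key]
    have hf : ∀ j : ℕ, HasSum (fun f : TI b (n + 1 + j) =>
        1 / (2 * ((n + 1 + j : ℕ) : ℝ) + 1) ^ 2 *
        ∏ i, 1 / (2 * (f.1 i : ℝ) + 1) ^ 2)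
        (1 / (2 * ((n + 1 + j : ℕ) : ℝ) + 1) ^ 2 * k b (n + 1 + j)) :=
      fun m => (ih _).mul_left _
    refine HasSum.sigma_of_hasSum (ks b n) hf ?_
    rw [summable_sigma_of_nonneg (fun p => by positivity)]
    refine ⟨fun m => (hf m).summable, ?_⟩
    simpa only [(hf _).tsum_eq] using (ks b n).summable

/-! ### Integrals of powers of cosine -/

/-- `c n = (2n choose n) / 4^n`. -/
noncomputable def cc : ℕ → ℝ
  | 0 => 1
  | n + 1 => cc n * ((2 * (n : ℝ) + 1) / (2 * (n : ℝ) + 2))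

lemma cc_pos (n : ℕ) : 0 < cc n := by
  induction n with
  | zero => simp [cc]
  | succ n ih => rw [cc]; positivity

lemma cc_le (n : ℕ) : cc n ≤ 1 := by
  induction n with
  | zero => simp [cc]
  | succ n ih =>
    rw [cc]
    refine mul_le_one₀ ih (by positivity) ?_
    rw [div_le_one (by positivity)]
    linarith

lemma cc_succ (n : ℕ) : cc (n + 1) * (2 * (n : ℝ) + 2) = cc n * (2 * (n : ℝ) + 1) := by
  rw [cc]; field_simp

/-- Moments. -/
noncomputable def KK (b m : ℕ) : ℝ :=
  ∫ θ in (0:ℝ)..(π / 2), cos θ ^ m * (θ ^ (2 * b) / (Nat.factorial (2 * b)))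

lemma hasDerivAt_powfac (k : ℕ) (x : ℝ) :
    HasDerivAt (fun θ : ℝ => θ ^ (k + 1) / (Nat.factorial (k + 1) : ℝ))
      (x ^ k / (Nat.factorial k : ℝ)) x := by
  have h := (hasDerivAt_pow (k + 1) x).div_const (Nat.factorial (k + 1) : ℝ)
  refine h.congr_deriv ?_
  have : (Nat.factorial k : ℝ) ≠ 0 := by positivity
  rw [Nat.factorial_succ]
  push_cast
  field_simp

lemma hasDerivAt_cospow (m : ℕ) (x : ℝ) :
    HasDerivAt (fun θ : ℝ => cos θ ^ (m + 1)) (-((m : ℝ) + 1) * cos x ^ m * sin x) x := by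
  refine ((hasDerivAt_cos x).pow (m + 1)).congr_deriv ?_
  push_cast
  ring

lemma KK_intble (b m : ℕ) : IntervalIntegrable
    (fun θ : ℝ => cos θ ^ m * (θ ^ (2 * b) / (Nat.factorial (2 * b) : ℝ)))
      MeasureTheory.volume 0 (π / 2) :=
  Continuous.intervalIntegrable (by fun_prop) _ _

lemma KK_rec (b m : ℕ) :
    KK b (m + 2) = ((m : ℝ) + 2) * ((m : ℝ) + 1) * KK (b + 1) m
      - ((m : ℝ) + 2) ^ 2 * KK (b + 1) (m + 2) := by
  have hF : ∀ x ∈ Set.uIcc (0:ℝ) (π / 2), HasDerivAt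
      (fun θ : ℝ => (-((m : ℝ) + 2) * cos θ ^ (m + 1) * sin θ) *
          (θ ^ (2 * (b + 1)) / (Nat.factorial (2 * (b + 1)) : ℝ))
        - cos θ ^ (m + 2) * (θ ^ (2 * b + 1) / (Nat.factorial (2 * b + 1) : ℝ)))
      (((m : ℝ) + 2) * ((m : ℝ) + 1) *
          (cos x ^ m * (x ^ (2 * (b + 1)) / (Nat.factorial (2 * (b + 1)) : ℝ)))
        - ((m : ℝ) + 2) ^ 2 *
          (cos x ^ (m + 2) * (x ^ (2 * (b + 1)) / (Nat.factorial (2 * (b + 1)) : ℝ)))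
        - cos x ^ (m + 2) * (x ^ (2 * b) / (Nat.factorial (2 * b) : ℝ))) x := by
    intro x _
    have h1 := (((hasDerivAt_cospow m x).const_mul (-((m : ℝ) + 2))).mul (hasDerivAt_sin x)).mul
      (hasDerivAt_powfac (2 * b + 1) x)
    have h2 := (hasDerivAt_cospow (m + 1) x).mul (hasDerivAt_powfac (2 * b) x)
    refine (h1.sub h2).congr_deriv ?_
    simp only [show 2 * (b + 1) = 2 * b + 1 + 1 by ring, Pi.mul_apply]
    generalize x ^ (2 * b + 1 + 1) / (Nat.factorial (2 * b + 1 + 1) : ℝ) = A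
    generalize x ^ (2 * b + 1) / (Nat.factorial (2 * b + 1) : ℝ) = B
    generalize x ^ (2 * b) / (Nat.factorial (2 * b) : ℝ) = C
    have hs : sin x ^ 2 = 1 - cos x ^ 2 := by
      have := sin_sq_add_cos_sq x; linarith
    push_cast
    simp only [pow_succ (cos x)]
    linear_combination ((m:ℝ) + 2) * ((m:ℝ) + 1) * cos x ^ m * A * hs
  have h := intervalIntegral.integral_eq_sub_of_hasDerivAt hF
    (Continuous.intervalIntegrable (by fun_prop) _ _)
  rw [intervalIntegral.integral_sub
      (((KK_intble (b+1) m).const_mul _).sub ((KK_intble (b+1) (m+2)).const_mul _))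
      (KK_intble b (m+2)),
    intervalIntegral.integral_sub ((KK_intble (b+1) m).const_mul _)
      ((KK_intble (b+1) (m+2)).const_mul _),
    intervalIntegral.integral_const_mul, intervalIntegral.integral_const_mul] at h
  simp only [cos_pi_div_two] at h
  simp at h
  simp only [KK] at h ⊢
  linarith

lemma KK_zero_rec (m : ℕ) : ((m : ℝ) + 2) * KK 0 (m + 2) = ((m : ℝ) + 1) * KK 0 m := by
  have h := integral_cos_pow (a := 0) (b := π / 2) m
  simp [KK]
  rw [h]
  simp
  field_simp

lemma KK_zero (n : ℕ) : (2 * (n : ℝ) + 1) * cc n * KK 0 (2 * n + 1) = 1 := by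
  induction n with
  | zero => simp [KK, cc]
  | succ n ih =>
    have h1 := KK_zero_rec (2 * n + 1)
    have h2 := cc_succ n
    rw [show 2 * (n + 1) + 1 = 2 * n + 1 + 2 by ring]
    push_cast at h1 ⊢
    linear_combination ih + cc (n + 1) * h1 + KK 0 (2 * n + 1) * h2

/-- Normalised moments. -/
noncomputable def kk (b n : ℕ) : ℝ := (2 * (n : ℝ) + 1) * cc n * KK b (2 * n + 1)

lemma kk_rec (b n : ℕ) :
    kk (b + 1) n = kk (b + 1) (n + 1) + 1 / (2 * ((n + 1 : ℕ) : ℝ) + 1) ^ 2 * kk b (n + 1) := by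
  have h1 := KK_rec b (2 * n + 1)
  have h2 := cc_succ n
  simp only [kk]
  rw [show 2 * (n + 1) + 1 = 2 * n + 1 + 2 by ring, h1]
  push_cast
  have : (2 * ((n:ℝ) + 1) + 1) ≠ 0 := by positivity
  field_simp
  linear_combination - (2 * ((n:ℝ) + 1) + 1) * KK (b+1) (2 * n + 1) * h2

lemma KK_nonneg (b m : ℕ) : 0 ≤ KK b m := by
  refine intervalIntegral.integral_nonneg (by positivity) fun x hx => ?_
  have : 0 ≤ cos x := cos_nonneg_of_mem_Icc ⟨by linarith [hx.1, pi_pos], hx.2⟩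
  have := hx.1
  positivity

lemma kk_nonneg (b n : ℕ) : 0 ≤ kk b n :=
  mul_nonneg (mul_nonneg (by positivity) (cc_pos n).le) (KK_nonneg _ _)

lemma KK_le (b m : ℕ) :
    KK (b + 1) m ≤ (π / 2) ^ (2 * b + 2) * (KK 0 m - KK 0 (m + 2)) := by
  simp only [KK]
  rw [← intervalIntegral.integral_sub (KK_intble 0 m) (KK_intble 0 (m+2)),
    ← intervalIntegral.integral_const_mul]
  refine intervalIntegral.integral_mono_on (by positivity) (KK_intble _ _)
    (Continuous.intervalIntegrable (by fun_prop) _ _) fun x hx => ?_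
  have hc : 0 ≤ cos x := cos_nonneg_of_mem_Icc ⟨by linarith [hx.1, pi_pos], hx.2⟩
  have h0 := hx.1
  have hs : x ≤ π / 2 * sin x := by
    have := mul_le_sin hx.1 hx.2
    have hp := pi_pos
    calc x = π / 2 * (2 / π * x) := by field_simp
      _ ≤ _ := by gcongr
  have hx2 : x ^ 2 ≤ (π / 2) ^ 2 * (1 - cos x ^ 2) := by
    rw [← sin_sq, ← mul_pow]
    gcongr
  have h3 : x ^ (2 * (b + 1)) ≤ (π / 2) ^ (2 * b + 2) * (1 - cos x ^ 2) := by
    calc x ^ (2 * (b + 1)) = x ^ (2 * b) * x ^ 2 := by ring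
      _ ≤ (π / 2) ^ (2 * b) * ((π / 2) ^ 2 * (1 - cos x ^ 2)) := by
          gcongr; exact hx.2
      _ = _ := by ring
  have h4 : x ^ (2 * (b + 1)) / (Nat.factorial (2 * (b + 1)) : ℝ) ≤ x ^ (2 * (b + 1)) := by
    refine div_le_self (by positivity) ?_
    exact_mod_cast Nat.succ_le_of_lt (Nat.factorial_pos _)
  calc _ ≤ cos x ^ m * ((π / 2) ^ (2 * b + 2) * (1 - cos x ^ 2)) := by
        gcongr; exact h4.trans h3
    _ = _ := by simp; ring

lemma kk_le (b n : ℕ) : kk (b + 1) n ≤ (π / 2) ^ (2 * b + 2) * (1 / (2 * (n : ℝ) + 3)) := by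
  have h0 := KK_zero n
  have h1 := KK_zero_rec (2 * n + 1)
  have h2 := KK_le b (2 * n + 1)
  have h3 : (2 * (n : ℝ) + 1) * cc n * (KK 0 (2 * n + 1) - KK 0 (2 * n + 1 + 2))
      = 1 / (2 * (n : ℝ) + 3) := by
    rw [eq_div_iff (by positivity)]
    push_cast at h1
    linear_combination h0 - (2 * (n : ℝ) + 1) * cc n * h1
  rw [← h3, kk]
  have : 0 ≤ (2 * (n : ℝ) + 1) * cc n := mul_nonneg (by positivity) (cc_pos n).le
  calc _ ≤ _ := mul_le_mul_of_nonneg_left h2 this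
    _ = _ := by ring

lemma kk_zero (n : ℕ) : kk 0 n = 1 := KK_zero n

lemma kk_bdd (b : ℕ) : ∃ C : ℝ, 0 ≤ C ∧ ∀ n, kk b n ≤ C := by
  cases b with
  | zero => exact ⟨1, by norm_num, fun n => (kk_zero n).le⟩
  | succ b =>
    refine ⟨(π / 2) ^ (2 * b + 2), by positivity, fun n => (kk_le b n).trans ?_⟩
    refine mul_le_of_le_one_right (by positivity) ?_
    rw [div_le_one (by positivity)]
    have : (0:ℝ) ≤ n := n.cast_nonneg
    linarith

open Filter Topology in
lemma kk_tendsto (b : ℕ) : Tendsto (fun n => kk (b + 1) n) atTop (𝓝 0) := by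
  have h : Tendsto (fun n : ℕ => (π / 2) ^ (2 * b + 2) * (1 / ((n : ℝ) + 1))) atTop (𝓝 0) := by
    simpa using (tendsto_one_div_add_atTop_nhds_zero_nat (𝕜 := ℝ)).const_mul
      ((π / 2) ^ (2 * b + 2))
  refine squeeze_zero (fun n => kk_nonneg _ _) (fun n => (kk_le b n).trans ?_) h
  have : (0:ℝ) ≤ n := n.cast_nonneg
  gcongr <;> linarith

lemma kk_hasSum (b n : ℕ) :
    HasSum (fun j : ℕ => 1 / (2 * ((n + 1 + j : ℕ) : ℝ) + 1) ^ 2 * kk b (n + 1 + j))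
      (kk (b + 1) n) := by
  rw [hasSum_iff_tendsto_nat_of_nonneg
    (fun j => mul_nonneg (by positivity) (kk_nonneg _ _))]
  have hp : ∀ N, ∑ j ∈ Finset.range N,
      1 / (2 * ((n + 1 + j : ℕ) : ℝ) + 1) ^ 2 * kk b (n + 1 + j) =
      kk (b + 1) n - kk (b + 1) (N + n) := by
    intro N
    induction N with
    | zero => simp
    | succ N ih =>
      have h := kk_rec b (N + n)
      rw [Finset.sum_range_succ, ih, show N + 1 + n = N + n + 1 by ring,
        show n + 1 + N = N + n + 1 by ring]
      linarith
  simp only [hp]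
  have h := (Filter.tendsto_add_atTop_iff_nat n).2 (kk_tendsto b)
  simpa using h.const_sub (kk (b + 1) n)

lemma integral_arccos (b n : ℕ) :
    ∫ x in (0:ℝ)..1, x ^ (2 * n) * (arccos x ^ (2 * b + 1) / (Nat.factorial (2 * b + 1) : ℝ))
      = KK b (2 * n + 1) / (2 * (n : ℝ) + 1) := by
  have hsub := intervalIntegral.integral_comp_mul_deriv (a := 0) (b := π / 2)
    (f := cos) (f' := fun x => - sin x)
    (g := fun x => x ^ (2 * n) * (arccos x ^ (2 * b + 1) / (Nat.factorial (2 * b + 1) : ℝ)))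
    (fun x _ => hasDerivAt_cos x) (by fun_prop)
    (by have := continuous_arccos; fun_prop)
  rw [cos_zero, cos_pi_div_two, intervalIntegral.integral_symm 0 1] at hsub
  have h2 : ∫ x in (0:ℝ)..(π / 2), ((fun x => x ^ (2 * n) *
      (arccos x ^ (2 * b + 1) / (Nat.factorial (2 * b + 1) : ℝ))) ∘ cos) x * (- sin x)
      = ∫ x in (0:ℝ)..(π / 2), - (cos x ^ (2 * n) * sin x *
        (x ^ (2 * b + 1) / (Nat.factorial (2 * b + 1) : ℝ))) := by
    refine intervalIntegral.integral_congr fun x hx => ?_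
    rw [Set.uIcc_of_le (by positivity)] at hx
    simp only [Function.comp]
    rw [arccos_cos hx.1 (by linarith [hx.2, pi_pos])]
    ring
  rw [h2, intervalIntegral.integral_neg] at hsub
  have h3 := neg_injective hsub
  rw [← h3]
  have hG : ∀ x ∈ Set.uIcc (0:ℝ) (π / 2), HasDerivAt
      (fun θ : ℝ => cos θ ^ (2 * n + 1) * (θ ^ (2 * b + 1) / (Nat.factorial (2 * b + 1) : ℝ)))
      (cos x ^ (2 * n + 1) * (x ^ (2 * b) / (Nat.factorial (2 * b) : ℝ)) -
       (2 * (n : ℝ) + 1) * (cos x ^ (2 * n) * sin x *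
        (x ^ (2 * b + 1) / (Nat.factorial (2 * b + 1) : ℝ)))) x := by
    intro x _
    refine ((hasDerivAt_cospow (2 * n) x).mul (hasDerivAt_powfac (2 * b) x)).congr_deriv ?_
    push_cast
    ring
  have h := intervalIntegral.integral_eq_sub_of_hasDerivAt hG
    (Continuous.intervalIntegrable (by fun_prop) _ _)
  rw [intervalIntegral.integral_sub (KK_intble b (2 * n + 1))
    (Continuous.intervalIntegrable (by fun_prop) _ _),
    intervalIntegral.integral_const_mul] at h
  simp only [cos_pi_div_two] at h
  simp only [ne_eq, Nat.add_eq_zero_iff, one_ne_zero, and_false, not_false_eq_true, zero_pow,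
    zero_mul, zero_div, mul_zero, sub_zero] at h
  rw [eq_div_iff (by positivity)]
  simp only [KK]
  linarith

/-! ### Power series of odd powers of arcsine -/

/-- Coefficients. -/
noncomputable def ee (a n : ℕ) : ℝ := hd a n * cc n / (2 * (n : ℝ) + 1)

lemma ee_nonneg (a n : ℕ) : 0 ≤ ee a n :=
  div_nonneg (mul_nonneg (hd_nonneg a n) (cc_pos n).le) (by positivity)

/-- Partial sums. -/
noncomputable def ff (a N : ℕ) (θ : ℝ) : ℝ :=
  ∑ n ∈ Finset.range N, ee a n * sin θ ^ (2 * n + 1)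

/-- First derivative. -/
noncomputable def ff1 (a N : ℕ) (θ : ℝ) : ℝ :=
  ∑ n ∈ Finset.range N, ee a n * ((2 * (n : ℝ) + 1) * sin θ ^ (2 * n) * cos θ)

/-- Second derivative. -/
noncomputable def ff2 (a N : ℕ) (θ : ℝ) : ℝ :=
  ∑ n ∈ Finset.range N, ee a n * ((2 * (n : ℝ) + 1) * (2 * (n : ℝ)) * sin θ ^ (2 * n - 1)
    - (2 * (n : ℝ) + 1) ^ 2 * sin θ ^ (2 * n + 1))

lemma hasDerivAt_ff (a N : ℕ) (x : ℝ) : HasDerivAt (ff a N) (ff1 a N x) x := by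
  unfold ff ff1
  refine HasDerivAt.fun_sum fun n _ => ?_
  refine (((hasDerivAt_sin x).pow (2 * n + 1)).const_mul (ee a n)).congr_deriv ?_
  push_cast
  simp

lemma hasDerivAt_ff1 (a N : ℕ) (x : ℝ) : HasDerivAt (ff1 a N) (ff2 a N x) x := by
  unfold ff1 ff2
  refine HasDerivAt.fun_sum fun n _ => ?_
  refine (((((hasDerivAt_sin x).pow (2 * n)).const_mul (2 * (n : ℝ) + 1)).mul
    (hasDerivAt_cos x)).const_mul (ee a n)).congr_deriv ?_
  have hs : cos x ^ 2 = 1 - sin x ^ 2 := by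
    have := sin_sq_add_cos_sq x; linarith
  simp only [Pi.pow_apply]
  push_cast
  cases n with
  | zero => simp
  | succ n =>
    rw [show 2 * (n + 1) - 1 = 2 * n + 1 by omega, show 2 * (n + 1) = 2 * n + 2 by ring]
    push_cast
    linear_combination ee a (n + 1) * (2 * ((n:ℝ) + 1) + 1) * (2 * ((n:ℝ) + 1)) *
      sin x ^ (2 * n + 1) * hs

lemma ff2_aux (a N : ℕ) (x : ℝ) : ff2 a (N + 1) x =
    (∑ n ∈ Finset.range N, (ee a (n + 1) * (2 * (n : ℝ) + 3) * (2 * (n : ℝ) + 2)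
      - ee a n * (2 * (n : ℝ) + 1) ^ 2) * sin x ^ (2 * n + 1))
    - ee a N * (2 * (N : ℝ) + 1) ^ 2 * sin x ^ (2 * N + 1) := by
  induction N with
  | zero => simp [ff2]
  | succ N ih =>
    have : ff2 a (N + 1 + 1) x = ff2 a (N + 1) x + ee a (N + 1) *
      ((2 * ((N + 1 : ℕ) : ℝ) + 1) * (2 * ((N + 1 : ℕ) : ℝ)) * sin x ^ (2 * (N + 1) - 1)
    - (2 * ((N + 1 : ℕ) : ℝ) + 1) ^ 2 * sin x ^ (2 * (N + 1) + 1)) := by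
      unfold ff2; rw [Finset.sum_range_succ]
    rw [this, ih, Finset.sum_range_succ, show 2 * (N + 1) - 1 = 2 * N + 1 by omega]
    push_cast
    ring

lemma ee_rec (a n : ℕ) : ee a (n + 1) * (2 * (n : ℝ) + 3) * (2 * (n : ℝ) + 2)
      - ee a n * (2 * (n : ℝ) + 1) ^ 2 = (hd a (n + 1) - hd a n) * cc n * (2 * (n : ℝ) + 1) := by
  unfold ee
  have h := cc_succ n
  have h1 : (2 * ((n : ℝ) + 1) + 1) ≠ 0 := by positivity
  have h2 : (2 * (n : ℝ) + 1) ≠ 0 := by positivity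
  have h3 : (2 * (n : ℝ) + 3) = 2 * ((n : ℝ) + 1) + 1 := by ring
  rw [h3]
  push_cast
  rw [div_mul_cancel₀ _ h1]
  field_simp
  linear_combination hd a (n + 1) * h

/-- The error term. -/
noncomputable def er (a N : ℕ) (x : ℝ) : ℝ :=
  ee a N * (2 * (N : ℝ) + 1) ^ 2 * sin x ^ (2 * N + 1)

lemma ff2_zero (N : ℕ) (x : ℝ) : ff2 0 (N + 1) x = - er 0 N x := by
  rw [ff2_aux]
  simp only [ee_rec, hd, er]
  simp

lemma ff2_succ (a N : ℕ) (x : ℝ) : ff2 (a + 1) (N + 1) x = ff a N x - er (a + 1) N x := by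
  rw [ff2_aux]
  simp only [ee_rec, hd_succ, er, ff]
  congr 1
  refine Finset.sum_congr rfl fun n _ => ?_
  congr 1
  unfold ee
  field_simp
  ring

open Filter Topology in
lemma er_bound (a : ℕ) (T : ℝ) (h0 : 0 ≤ T) (hT : T < π / 2) :
    ∃ δ : ℕ → ℝ, Tendsto δ atTop (𝓝 0) ∧ ∀ N, ∀ x ∈ Set.Icc 0 T, 0 ≤ er a N x ∧ er a N x ≤ δ N := by
  obtain ⟨C, hC, hb⟩ := hd_bdd a
  have hq0 : 0 ≤ sin T := sin_nonneg_of_nonneg_of_le_pi h0 (by linarith [pi_pos])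
  have hq1 : sin T < 1 := by
    rw [← sin_pi_div_two]
    exact sin_lt_sin_of_lt_of_le_pi_div_two (by linarith [pi_pos]) le_rfl hT
  refine ⟨fun N => C * (((2 * N + 1 : ℕ) : ℝ) * sin T ^ (2 * N + 1)), ?_, fun N x hx => ?_⟩
  · have h := tendsto_self_mul_const_pow_of_lt_one hq0 hq1
    have h2 : Tendsto (fun N : ℕ => 2 * N + 1) atTop atTop :=
      tendsto_atTop_mono (fun n => by simp only [id]; omega) tendsto_id
    simpa using (h.comp h2).const_mul C
  · have hs0 : 0 ≤ sin x := sin_nonneg_of_nonneg_of_le_pi hx.1 (by linarith [pi_pos, hx.2])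
    have hs1 : sin x ≤ sin T := sin_le_sin_of_le_of_le_pi_div_two
      (by linarith [pi_pos, hx.1]) hT.le hx.2
    have hE : er a N x = hd a N * cc N * ((2 * (N : ℝ) + 1) * sin x ^ (2 * N + 1)) := by
      unfold er ee; field_simp
    have h1 := hd_nonneg a N
    have h2 := cc_pos N
    rw [hE]
    refine ⟨by positivity, ?_⟩
    push_cast
    have h3 : hd a N * cc N ≤ C := by
      have := mul_le_mul (hb N) (cc_le N) h2.le hC
      simpa using this
    gcongr

lemma convex_lemma (f f1 f2 : ℝ → ℝ) (T : ℝ) (hf : ∀ x, HasDerivAt f (f1 x) x)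
    (hf1 : ∀ x, HasDerivAt f1 (f2 x) x) (h0 : f 0 = 0) (h1 : f1 0 = 0)
    (h2 : ∀ x ∈ Set.Icc 0 T, 0 ≤ f2 x) : ∀ x ∈ Set.Icc 0 T, 0 ≤ f x := by
  have step : ∀ g g' : ℝ → ℝ, (∀ x, HasDerivAt g (g' x) x) → g 0 = 0 →
      (∀ x ∈ Set.Icc 0 T, 0 ≤ g' x) → ∀ x ∈ Set.Icc 0 T, 0 ≤ g x := by
    intro g g' hg hg0 hg' x hx
    have hm : MonotoneOn g (Set.Icc 0 T) := by
      refine monotoneOn_of_deriv_nonneg (convex_Icc _ _)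
        (fun y _ => (hg y).continuousAt.continuousWithinAt)
        (fun y _ => (hg y).differentiableAt.differentiableWithinAt) fun y hy => ?_
      rw [(hg y).deriv]
      exact hg' y (interior_subset hy)
    rw [← hg0]
    exact hm ⟨le_rfl, hx.1.trans hx.2⟩ hx hx.1
  exact step f f1 hf h0 (step f1 f2 hf1 h1 h2)

lemma two_sided (g g1 g2 : ℝ → ℝ) (T C : ℝ) (hT : 0 ≤ T) (hg : ∀ x, HasDerivAt g (g1 x) x)
    (hg1 : ∀ x, HasDerivAt g1 (g2 x) x) (h0 : g 0 = 0) (h1 : g1 0 = 0)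
    (h2 : ∀ x ∈ Set.Icc 0 T, 0 ≤ g2 x ∧ g2 x ≤ C) :
    ∀ x ∈ Set.Icc 0 T, 0 ≤ g x ∧ g x ≤ C * T ^ 2 := by
  intro x hx
  refine ⟨convex_lemma g g1 g2 T hg hg1 h0 h1 (fun y hy => (h2 y hy).1) x hx, ?_⟩
  have hC : 0 ≤ C := (h2 0 ⟨le_rfl, hT⟩).1.trans (h2 0 ⟨le_rfl, hT⟩).2
  have h := convex_lemma (fun y => C * (y ^ 2 / 2) - g y) (fun y => C * y - g1 y)
    (fun y => C - g2 y) T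
    (fun y => ((((hasDerivAt_pow 2 y).div_const 2).const_mul C).sub (hg y)).congr_deriv
      (by simp))
    (fun y => (((hasDerivAt_id y).const_mul C).sub (hg1 y)).congr_deriv (by simp))
    (by simp [h0]) (by simp [h1]) (fun y hy => by linarith [(h2 y hy).2]) x hx
  have h3 : x ^ 2 ≤ T ^ 2 := by have := hx.1; have := hx.2; gcongr
  have h4 : x ^ 2 / 2 ≤ T ^ 2 := by nlinarith [sq_nonneg x]
  have := mul_le_mul_of_nonneg_left h4 hC
  linarith

lemma ff_at_zero (a N : ℕ) : ff a N 0 = 0 := by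
  simp [ff]

lemma ff1_at_zero (a N : ℕ) : ff1 a (N + 1) 0 = ee a 0 := by
  simp [ff1, Finset.sum_range_succ']

open Filter Topology in
lemma arcsin_approx (T : ℝ) (hT0 : 0 ≤ T) (hT : T < π / 2) (a : ℕ) :
    ∃ ε : ℕ → ℝ, Tendsto ε atTop (𝓝 0) ∧ ∀ N, ∀ x ∈ Set.Icc 0 T,
      0 ≤ x ^ (2 * a + 1) / (Nat.factorial (2 * a + 1) : ℝ) - ff a (N + a + 1) x ∧
      x ^ (2 * a + 1) / (Nat.factorial (2 * a + 1) : ℝ) - ff a (N + a + 1) x ≤ ε N := by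
  induction a with
  | zero =>
    obtain ⟨δ, hδ, hb⟩ := er_bound 0 T hT0 hT
    refine ⟨fun N => δ N * T ^ 2, by simpa using hδ.mul_const (T ^ 2), fun N => ?_⟩
    refine two_sided (fun x => x ^ (2 * 0 + 1) / (Nat.factorial (2 * 0 + 1) : ℝ) -
      ff 0 (N + 0 + 1) x) (fun x => 1 - ff1 0 (N + 1) x) (fun x => 0 - ff2 0 (N + 1) x) T _ hT0
      (fun x => ?_) (fun x => ?_) ?_ ?_ ?_
    · exact ((hasDerivAt_powfac 0 x).sub (hasDerivAt_ff 0 (N + 1) x)).congr_deriv (by simp)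
    · exact ((hasDerivAt_const x (1:ℝ)).sub (hasDerivAt_ff1 0 (N + 1) x))
    · simp [ff_at_zero]
    · simp [ff1_at_zero, ee, hd, cc]
    · intro x hx
      simpa [ff2_zero] using hb N x hx
  | succ a ih =>
    obtain ⟨δ, hδ, hb⟩ := er_bound (a + 1) T hT0 hT
    obtain ⟨ε, hε, he⟩ := ih
    refine ⟨fun N => (ε N + δ (N + a + 1)) * T ^ 2, ?_, fun N => ?_⟩
    · have h2 : Tendsto (fun N : ℕ => δ (N + a + 1)) atTop (𝓝 0) :=
        (tendsto_add_atTop_iff_nat (a + 1)).2 hδ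
      simpa using (hε.add h2).mul_const (T ^ 2)
    refine two_sided (fun x => x ^ (2 * (a + 1) + 1) / (Nat.factorial (2 * (a + 1) + 1) : ℝ) -
      ff (a + 1) (N + (a + 1) + 1) x)
      (fun x => x ^ (2 * a + 1 + 1) / (Nat.factorial (2 * a + 1 + 1) : ℝ)
        - ff1 (a + 1) (N + a + 1 + 1) x)
      (fun x => x ^ (2 * a + 1) / (Nat.factorial (2 * a + 1) : ℝ)
        - ff2 (a + 1) (N + a + 1 + 1) x) T _ hT0
      (fun x => ?_) (fun x => ?_) ?_ ?_ ?_
    · exact ((hasDerivAt_powfac (2 * a + 1 + 1) x).sub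
        (hasDerivAt_ff (a + 1) (N + a + 1 + 1) x))
    · exact ((hasDerivAt_powfac (2 * a + 1) x).sub (hasDerivAt_ff1 (a + 1) (N + a + 1 + 1) x))
    · simp [ff_at_zero]
    · simp [ff1_at_zero, ee, hd]
    · intro x hx
      have h1 := hb (N + a + 1) x hx
      have h2 := he N x hx
      simp only [ff2_succ]
      constructor <;> linarith [h1.1, h1.2, h2.1, h2.2]

lemma arcsin_hasSum (a : ℕ) (x : ℝ) (hx : x ∈ Set.Ioo (0:ℝ) 1) :
    HasSum (fun n => ee a n * x ^ (2 * n + 1))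
      (arcsin x ^ (2 * a + 1) / (Nat.factorial (2 * a + 1) : ℝ)) := by
  have h0 : 0 ≤ arcsin x := arcsin_nonneg.2 hx.1.le
  have h1 : arcsin x < π / 2 := arcsin_lt_pi_div_two.2 hx.2
  obtain ⟨ε, hε, he⟩ := arcsin_approx (arcsin x) h0 h1 a
  rw [hasSum_iff_tendsto_nat_of_nonneg
    (fun n => mul_nonneg (ee_nonneg a n) (pow_nonneg hx.1.le _)),
    ← Filter.tendsto_add_atTop_iff_nat (a + 1)]
  have hs : sin (arcsin x) = x := sin_arcsin (by linarith [hx.1]) hx.2.le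
  have h2 := squeeze_zero (fun N => (he N _ ⟨h0, le_rfl⟩).1) (fun N => (he N _ ⟨h0, le_rfl⟩).2) hε
  have h3 := h2.const_sub (arcsin x ^ (2 * a + 1) / (Nat.factorial (2 * a + 1) : ℝ))
  simp only [ff, hs, sub_sub_cancel, sub_zero] at h3
  exact h3

lemma tHead_eq (a n : ℕ) : tHead a n = hd a n := (hasSum_head a n).tsum_eq

lemma tTail_eq (b n : ℕ) : tTail b n = kk b n :=
  (hasSum_tail kk kk_zero kk_hasSum b n).tsum_eq

open MeasureTheory in
theorem integral_arcsin_arccos_eq_T (a b : ℕ) :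
    (∫ x in (0:ℝ)..1,
        Real.arcsin x ^ (2 * a + 1) / ((Nat.factorial (2 * a + 1)) * x) *
          (Real.arccos x ^ (2 * b + 1) / (Nat.factorial (2 * b + 1)))) =
      T a b := by
  set F : ℕ → ℝ → ℝ := fun n x =>
    ee a n * (x ^ (2 * n) * (arccos x ^ (2 * b + 1) / (Nat.factorial (2 * b + 1) : ℝ))) with hF
  have hcont : ∀ n, Continuous (F n) := by
    intro n
    have := continuous_arccos
    simp only [hF]
    fun_prop
  have hint : ∀ n, Integrable (F n) (volume.restrict (Set.Ioo (0:ℝ) 1)) := fun n =>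
    ((hcont n).integrableOn_Icc (a := 0) (b := 1)).mono_set Set.Ioo_subset_Icc_self
  have hval : ∀ n, ∫ x in Set.Ioo (0:ℝ) 1, F n x =
      (1 / (2 * (n : ℝ) + 1) ^ 3) * tHead a n * tTail b n := by
    intro n
    rw [← integral_Ioc_eq_integral_Ioo, ← intervalIntegral.integral_of_le zero_le_one]
    simp only [hF]
    rw [intervalIntegral.integral_const_mul, integral_arccos, tHead_eq, tTail_eq, kk, ee]
    field_simp
  have hnorm : ∀ n, ∫ x in Set.Ioo (0:ℝ) 1, ‖F n x‖ =
      (1 / (2 * (n : ℝ) + 1) ^ 3) * tHead a n * tTail b n := by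
    intro n
    rw [← hval n]
    refine setIntegral_congr_fun measurableSet_Ioo fun x hx => ?_
    have h1 := ee_nonneg a n
    have h2 := arccos_nonneg x
    have h3 := hx.1.le
    exact Real.norm_of_nonneg (by positivity)
  have hsum : Summable fun n : ℕ => (1 / (2 * (n : ℝ) + 1) ^ 3) * tHead a n * tTail b n := by
    obtain ⟨C, hC, h1⟩ := hd_bdd a
    obtain ⟨D, hD, h2⟩ := kk_bdd b
    have h := (Real.summable_one_div_nat_pow (p := 3)).2 (by norm_num)
    have h3 := (((summable_nat_add_iff 1).2 h).mul_right C).mul_right D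
    refine Summable.of_nonneg_of_le (fun n => ?_) (fun n => ?_) h3
    · rw [tHead_eq, tTail_eq]
      have := hd_nonneg a n
      have := kk_nonneg b n
      positivity
    · rw [tHead_eq, tTail_eq]
      have := hd_nonneg a n
      have := kk_nonneg b n
      have hn : (0:ℝ) ≤ n := n.cast_nonneg
      push_cast
      gcongr
      · linarith
      · exact h1 n
      · exact h2 n
  have hmain := hasSum_integral_of_summable_integral_norm hint (by simpa only [hnorm] using hsum)
  simp only [hval] at hmain
  rw [T, hmain.tsum_eq, intervalIntegral.integral_of_le zero_le_one,
    integral_Ioc_eq_integral_Ioo]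
  refine setIntegral_congr_fun measurableSet_Ioo fun x hx => ?_
  have hx0 : x ≠ 0 := hx.1.ne'
  have h := ((arcsin_hasSum a x hx).div_const x).mul_right
    (arccos x ^ (2 * b + 1) / (Nat.factorial (2 * b + 1) : ℝ))
  have h' : HasSum (fun n => F n x) (Real.arcsin x ^ (2 * a + 1) / ((Nat.factorial (2 * a + 1)) * x) *
          (Real.arccos x ^ (2 * b + 1) / (Nat.factorial (2 * b + 1)))) := by
    rw [div_div] at h
    have hfun : (fun n => F n x) = fun n => ee a n * x ^ (2 * n + 1) / x *
        (arccos x ^ (2 * b + 1) / (Nat.factorial (2 * b + 1) : ℝ)) := by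
      funext n
      simp only [hF]
      field_simp
      ring
    rw [hfun]
    exact h
  exact h'.tsum_eq.symm
end

section
/- For all nonnegative integers a, b: T(a,b) = π^(2b+1)/(2^(2b+1)(2a+1)!(2b+1)!) · ∫₀^(π/2) x^(2a+1)(1 − 2x/π)^(2b+1) cot(x) dx. -/
open Real

namespace TCot

lemma hd_congr {f : ℝ → ℝ} {d d' x : ℝ} (h : HasDerivAt f d x) (e : d' = d) :
    HasDerivAt f d' x := e ▸ h

lemma hs_congr {ι : Type*} {f g : ι → ℝ} {s : ℝ} (h : HasSum g s) (e : ∀ i, f i = g i) :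
    HasSum f s := by
  have : f = g := funext e
  rw [this]; exact h

/-- central coefficients -/
noncomputable def c : ℕ → ℝ
  | 0 => 1
  | n + 1 => c n * (2 * n + 1) / (2 * n + 2)

lemma c_succ (n : ℕ) : c (n + 1) * (2 * n + 2) = c n * (2 * n + 1) := by
  rw [c]; field_simp

lemma c_pos (n : ℕ) : 0 < c n := by
  induction n with
  | zero => simp [c]
  | succ n ih => rw [c]; positivity

lemma c_le (n : ℕ) : c n ≤ 1 := by
  induction n with
  | zero => simp [c]
  | succ n ih =>
    have := c_succ n
    have h := c_pos (n + 1)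
    have hn : (0:ℝ) ≤ n := n.cast_nonneg
    nlinarith

/-- head sums -/
noncomputable def H : ℕ → ℕ → ℝ
  | 0, _ => 1
  | a + 1, n => ∑ k ∈ Finset.range n, 1 / (2 * (k : ℝ) + 1) ^ 2 * H a k

lemma H_nonneg (a n : ℕ) : 0 ≤ H a n := by
  induction a generalizing n with
  | zero => simp [H]
  | succ a ih => rw [H]; exact Finset.sum_nonneg fun k _ => mul_nonneg (by positivity) (ih k)

lemma H_le (a n : ℕ) : H a n ≤ (n : ℝ) ^ a := by
  induction a generalizing n with
  | zero => simp [H]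
  | succ a ih =>
    rw [H]
    calc _ ≤ ∑ k ∈ Finset.range n, (n : ℝ) ^ a := by
          apply Finset.sum_le_sum
          intro k hk
          have hk' : (k : ℝ) ≤ n := by exact_mod_cast (Finset.mem_range.1 hk).le
          have h1 : 1 / (2 * (k : ℝ) + 1) ^ 2 ≤ 1 := by
            rw [div_le_one (by positivity)]
            have : (0:ℝ) ≤ k := k.cast_nonneg
            nlinarith
          calc _ ≤ 1 * H a k := mul_le_mul_of_nonneg_right h1 (H_nonneg a k)
            _ ≤ (k : ℝ) ^ a := by simpa using ih k
            _ ≤ _ := by gcongr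
      _ = _ := by simp [pow_succ]; ring

lemma H_hasSum (a n : ℕ) :
    HasSum (fun f : {f : Fin a → ℕ // StrictMono f ∧ ∀ i, f i < n} =>
      ∏ i, 1 / (2 * (f.1 i : ℝ) + 1) ^ 2) (H a n) := by
  induction a generalizing n with
  | zero =>
    have : Unique {f : Fin 0 → ℕ // StrictMono f ∧ ∀ i, f i < n} :=
      { default := ⟨Fin.elim0, fun i => i.elim0, fun i => i.elim0⟩
        uniq := fun f => Subtype.ext (Subsingleton.elim _ _) }
    simpa [H] using hasSum_unique (fun f : {f : Fin 0 → ℕ // StrictMono f ∧ ∀ i, f i < n} =>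
      ∏ i, 1 / (2 * (f.1 i : ℝ) + 1) ^ 2)
  | succ a ih =>
    let m : (Σ k : Fin n, {g : Fin a → ℕ // StrictMono g ∧ ∀ i, g i < k}) →
        {f : Fin (a + 1) → ℕ // StrictMono f ∧ ∀ i, f i < n} := fun p =>
      ⟨Fin.snoc (α := fun _ => ℕ) p.2.1 (p.1 : ℕ), by
        obtain ⟨k, g, hg, hg'⟩ := p
        constructor
        · intro i j hij
          induction j using Fin.lastCases with
          | last =>
            induction i using Fin.lastCases with
            | last => exact absurd hij (lt_irrefl _)
            | cast i => simpa using hg' i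
          | cast j =>
            induction i using Fin.lastCases with
            | last => exact absurd hij (not_lt.2 (Fin.le_last _))
            | cast i => simpa using hg (by simpa using hij)
        · intro i
          induction i using Fin.lastCases with
          | last => simp
          | cast i => simpa using (hg' i).trans k.2⟩
    have hm : Function.Bijective m := by
      constructor
      · rintro ⟨k, g, hg⟩ ⟨k', g', hg'⟩ h
        have h' := congrArg Subtype.val h
        have h1 : k = k' := by
          have := congrFun h' (Fin.last a)
          simpa [m, Fin.ext_iff] using this
        subst h1
        have h2 : g = g' := by
          funext i
          have := congrFun h' i.castSucc
          simpa [m] using this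
        subst h2
        rfl
      · rintro ⟨f, hf, hf'⟩
        refine ⟨⟨⟨f (Fin.last a), hf' _⟩, ⟨fun i => f i.castSucc, ?_, ?_⟩⟩, ?_⟩
        · intro i j hij
          exact hf (by simpa using hij)
        · intro i
          exact hf (Fin.castSucc_lt_last i)
        · apply Subtype.ext
          funext i
          induction i using Fin.lastCases with
          | last => simp [m]
          | cast i => simp [m]
    rw [← (Equiv.ofBijective m hm).hasSum_iff]
    have key : ∀ k : Fin n, HasSum (fun g : {g : Fin a → ℕ // StrictMono g ∧ ∀ i, g i < k} =>
        ((fun f : {f : Fin (a+1) → ℕ // StrictMono f ∧ ∀ i, f i < n} =>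
      ∏ i, 1 / (2 * (f.1 i : ℝ) + 1) ^ 2) ∘ (Equiv.ofBijective m hm)) ⟨k, g⟩)
        (1 / (2 * ((k : ℕ) : ℝ) + 1) ^ 2 * H a k) := by
      intro k
      refine hs_congr ((ih (k : ℕ)).mul_left (1 / (2 * ((k : ℕ) : ℝ) + 1) ^ 2)) ?_
      intro g
      simp only [Function.comp, Equiv.ofBijective_apply, m]
      rw [Fin.prod_univ_castSucc]
      simp [mul_comm]
    have hs := hasSum_fintype (fun k : Fin n => 1 / (2 * ((k : ℕ) : ℝ) + 1) ^ 2 * H a k)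
    rw [H, Finset.sum_range]
    refine HasSum.sigma_of_hasSum hs key ?_
    rw [summable_sigma_of_nonneg]
    · exact ⟨fun k => (key k).summable, by
        simpa only [(key _).tsum_eq] using hs.summable⟩
    · intro x
      exact Finset.prod_nonneg fun i _ => by positivity

lemma tHead_eq (a n : ℕ) : tHead a n = H a n := (H_hasSum a n).tsum_eq

/-- tail sums from a function satisfying the recurrence -/
lemma K_hasSum (K : ℕ → ℕ → ℝ) (h0 : ∀ n, K 0 n = 1)
    (hK : ∀ b n, HasSum (fun j : ℕ => 1 / (2 * ((n + 1 + j : ℕ) : ℝ) + 1) ^ 2 * K b (n + 1 + j))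
      (K (b + 1) n)) (b n : ℕ) :
    HasSum (fun f : {f : Fin b → ℕ // StrictMono f ∧ ∀ i, n < f i} =>
      ∏ i, 1 / (2 * (f.1 i : ℝ) + 1) ^ 2) (K b n) := by
  induction b generalizing n with
  | zero =>
    have : Unique {f : Fin 0 → ℕ // StrictMono f ∧ ∀ i, n < f i} :=
      { default := ⟨Fin.elim0, fun i => i.elim0, fun i => i.elim0⟩
        uniq := fun f => Subtype.ext (Subsingleton.elim _ _) }
    simpa [h0] using hasSum_unique (fun f : {f : Fin 0 → ℕ // StrictMono f ∧ ∀ i, n < f i} =>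
      ∏ i, 1 / (2 * (f.1 i : ℝ) + 1) ^ 2)
  | succ a ih =>
    let m : (Σ k : ℕ, {g : Fin a → ℕ // StrictMono g ∧ ∀ i, n + 1 + k < g i}) →
        {f : Fin (a + 1) → ℕ // StrictMono f ∧ ∀ i, n < f i} := fun p =>
      ⟨Fin.cons (α := fun _ => ℕ) (n + 1 + p.1) p.2.1, by
        obtain ⟨k, g, hg, hg'⟩ := p
        constructor
        · intro i j hij
          induction j using Fin.cases with
          | zero => exact absurd hij (not_lt.2 (Fin.zero_le _))
          | succ j =>
            induction i using Fin.cases with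
            | zero => simpa using hg' j
            | succ i => simpa using hg (by simpa using hij)
        · intro i
          induction i using Fin.cases with
          | zero => simp; omega
          | succ i => have := hg' i; simp; omega⟩
    have hm : Function.Bijective m := by
      constructor
      · rintro ⟨k, g, hg⟩ ⟨k', g', hg'⟩ h
        have h' := congrArg Subtype.val h
        have h1 : k = k' := by
          have := congrFun h' 0
          simpa [m] using this
        subst h1
        have h2 : g = g' := by
          funext i
          have := congrFun h' i.succ
          simpa [m] using this
        subst h2
        rfl
      · rintro ⟨f, hf, hf'⟩
        have h0 : n + 1 + (f 0 - (n + 1)) = f 0 := by have := hf' 0; omega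
        refine ⟨⟨f 0 - (n + 1), ⟨fun i => f i.succ, ?_, ?_⟩⟩, ?_⟩
        · intro i j hij
          exact hf (by simpa using hij)
        · intro i
          rw [h0]
          exact hf (Fin.succ_pos i)
        · apply Subtype.ext
          funext i
          induction i using Fin.cases with
          | zero => simp [m, h0]
          | succ i => simp [m]
    rw [← (Equiv.ofBijective m hm).hasSum_iff]
    have key : ∀ k : ℕ, HasSum (fun g : {g : Fin a → ℕ // StrictMono g ∧ ∀ i, n + 1 + k < g i} =>
        ((fun f : {f : Fin (a+1) → ℕ // StrictMono f ∧ ∀ i, n < f i} =>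
      ∏ i, 1 / (2 * (f.1 i : ℝ) + 1) ^ 2) ∘ (Equiv.ofBijective m hm)) ⟨k, g⟩)
        (1 / (2 * ((n + 1 + k : ℕ) : ℝ) + 1) ^ 2 * K a (n + 1 + k)) := by
      intro k
      refine hs_congr ((ih (n + 1 + k)).mul_left (1 / (2 * ((n + 1 + k : ℕ) : ℝ) + 1) ^ 2)) ?_
      intro g
      simp only [Function.comp, Equiv.ofBijective_apply, m]
      rw [Fin.prod_univ_succ]
      simp
    have hs := hK a n
    refine HasSum.sigma_of_hasSum hs key ?_
    rw [summable_sigma_of_nonneg]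
    · exact ⟨fun k => (key k).summable, by
        simpa only [(key _).tsum_eq] using hs.summable⟩
    · intro x
      exact Finset.prod_nonneg fun i _ => by positivity

/-- divided powers -/
noncomputable def p (k : ℕ) (x : ℝ) : ℝ := x ^ k / (Nat.factorial k : ℝ)

lemma p_deriv (k : ℕ) (x : ℝ) : HasDerivAt (p (k + 1)) (p k x) x := by
  have := (hasDerivAt_pow (k + 1) x).div_const ((Nat.factorial (k + 1) : ℕ) : ℝ)
  refine hd_congr (this) ?_
  have h : (Nat.factorial k : ℝ) ≠ 0 := by positivity
  simp only [p, Nat.factorial_succ, Nat.add_sub_cancel]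
  push_cast
  field_simp

@[fun_prop] lemma p_cont (k : ℕ) : Continuous (p k) := by unfold p; fun_prop

lemma p_zero_succ (k : ℕ) : p (k + 1) 0 = 0 := by simp [p]
lemma p_zero (x : ℝ) : p 0 x = 1 := by simp [p]
lemma p_one (x : ℝ) : p 1 x = x := by simp [p]

/-- cosine integrals -/
noncomputable def J (b n : ℕ) : ℝ := ∫ y in (0:ℝ)..(π / 2), cos y ^ (2 * n + 1) * p (2 * b) y

lemma cosf_deriv (n : ℕ) (y : ℝ) : HasDerivAt (fun y => cos y ^ (2 * n + 3))
    (-((2 * n + 3) * cos y ^ (2 * n + 2) * sin y)) y := by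
  refine hd_congr ((hasDerivAt_cos y).pow (2 * n + 3)) ?_
  simp

lemma cosf_deriv2 (n : ℕ) (y : ℝ) :
    HasDerivAt (fun y => -((2 * (n:ℝ) + 3) * cos y ^ (2 * n + 2) * sin y))
    ((2 * n + 3) * (2 * n + 2) * cos y ^ (2 * n + 1) - (2 * n + 3) ^ 2 * cos y ^ (2 * n + 3)) y := by
  refine hd_congr (((((hasDerivAt_cos y).pow (2 * n + 2)).const_mul (2 * (n:ℝ) + 3)).mul
    (hasDerivAt_sin y)).neg) ?_
  have := sin_sq y
  simp only [Nat.add_sub_cancel, Pi.pow_apply, show 2 * n + 2 - 1 = 2 * n + 1 by omega]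
  push_cast
  linear_combination (-(2 * (n:ℝ) + 3) * (2 * n + 2) * cos y ^ (2 * n + 1)) * this

lemma J_rec0 (n : ℕ) : (2 * n + 3) * (2 * n + 2) * J 0 n = (2 * n + 3) ^ 2 * J 0 (n + 1) := by
  have h := intervalIntegral.integral_eq_sub_of_hasDerivAt (a := 0) (b := π / 2)
    (fun y _ => cosf_deriv2 n y) (Continuous.intervalIntegrable (by fun_prop) _ _)
  rw [intervalIntegral.integral_sub (Continuous.intervalIntegrable (by fun_prop) _ _)
    (Continuous.intervalIntegrable (by fun_prop) _ _), intervalIntegral.integral_const_mul,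
    intervalIntegral.integral_const_mul] at h
  simp only [J, mul_zero, p_zero, mul_one]
  simp at h
  simp only [show 2 * (n + 1) + 1 = 2 * n + 3 by ring]
  linarith

lemma J_rec (b n : ℕ) : (2 * n + 3) * (2 * n + 2) * J (b + 1) n =
    (2 * n + 3) ^ 2 * J (b + 1) (n + 1) + J b (n + 1) := by
  have h := intervalIntegral.integral_eq_sub_of_hasDerivAt (a := 0) (b := π / 2)
    (fun y _ => ((cosf_deriv2 n y).mul (p_deriv (2 * b + 1) y)).sub
      ((cosf_deriv n y).mul (p_deriv (2 * b) y)))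
      (Continuous.intervalIntegrable (by fun_prop) _ _)
  have e : (∫ y in (0:ℝ)..(π / 2), ((2 * n + 3) * (2 * n + 2) * (cos y ^ (2 * n + 1) * p (2 * b + 2) y)
      - (2 * n + 3) ^ 2 * (cos y ^ (2 * n + 3) * p (2 * b + 2) y)) - cos y ^ (2 * n + 3) * p (2 * b) y)
      = 0 := by
    refine Eq.trans (Eq.trans (intervalIntegral.integral_congr ?_) h) ?_
    · intro y _
      simp only
      ring
    · simp [p_zero_succ]
  rw [intervalIntegral.integral_sub (Continuous.intervalIntegrable (by fun_prop) _ _)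
    (Continuous.intervalIntegrable (by fun_prop) _ _),
    intervalIntegral.integral_sub (Continuous.intervalIntegrable (by fun_prop) _ _)
    (Continuous.intervalIntegrable (by fun_prop) _ _), intervalIntegral.integral_const_mul,
    intervalIntegral.integral_const_mul] at e
  simp only [J, show 2 * (n + 1) + 1 = 2 * n + 3 by ring, show 2 * (b + 1) = 2 * b + 2 by ring]
  linarith

/-- normalised cosine integrals -/
noncomputable def K (b n : ℕ) : ℝ := (2 * n + 1) * c n * J b n

lemma K_zero (n : ℕ) : K 0 n = 1 := by
  induction n with
  | zero => simp [K, J, c, p_zero]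
  | succ n ih =>
    rw [← ih]
    have h1 := J_rec0 n
    have h2 := c_succ n
    have h3 : (2 * (n:ℝ) + 3) ≠ 0 := by positivity
    simp only [K]
    push_cast
    apply mul_left_cancel₀ h3
    linear_combination (-c (n+1)) * h1 + ((2 * n + 3) * J 0 n) * h2

lemma K_rec (b n : ℕ) : K (b + 1) n = K (b + 1) (n + 1) +
    1 / (2 * ((n + 1 : ℕ) : ℝ) + 1) ^ 2 * K b (n + 1) := by
  have h1 := J_rec b n
  have h2 := c_succ n
  have h3 : (2 * (n:ℝ) + 3) ≠ 0 := by positivity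
  simp only [K]
  push_cast
  rw [show 2 * ((n:ℝ) + 1) + 1 = 2 * n + 3 by ring]
  field_simp
  linear_combination (c (n+1)) * h1 - ((2 * n + 3) * J (b+1) n) * h2

lemma J_nonneg (b n : ℕ) : 0 ≤ J b n := by
  apply intervalIntegral.integral_nonneg (by positivity)
  intro y hy
  have : 0 ≤ cos y := cos_nonneg_of_mem_Icc ⟨by linarith [hy.1, pi_pos], hy.2⟩
  have := hy.1
  unfold p
  positivity

lemma K_nonneg (b n : ℕ) : 0 ≤ K b n :=
  mul_nonneg (mul_nonneg (by positivity) (c_pos n).le) (J_nonneg b n)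

lemma J_bound (b : ℕ) : ∃ C : ℝ, 0 ≤ C ∧ ∀ n, J (b + 1) n ≤ C * (J 0 n - J 0 (n + 1)) := by
  refine ⟨(π / 2) ^ (2 * b + 2), by positivity, fun n => ?_⟩
  have hc : Continuous (fun y : ℝ => cos y ^ (2 * n + 1) * p (2 * 0) y) := by fun_prop
  have hc' : Continuous (fun y : ℝ => cos y ^ (2 * (n + 1) + 1) * p (2 * 0) y) := by fun_prop
  have hc2 : Continuous (fun y : ℝ => cos y ^ (2 * n + 1) * p (2 * (b + 1)) y) := by fun_prop
  unfold J
  rw [← intervalIntegral.integral_sub (hc.intervalIntegrable _ _) (hc'.intervalIntegrable _ _),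
    ← intervalIntegral.integral_const_mul]
  apply intervalIntegral.integral_mono_on (by positivity) (hc2.intervalIntegrable _ _)
    (((hc.sub hc').const_mul _).intervalIntegrable _ _)
  intro y hy
  have h0 : 0 ≤ cos y := cos_nonneg_of_mem_Icc ⟨by linarith [hy.1, pi_pos], hy.2⟩
  have hj : y ≤ π / 2 * sin y := by
    have := mul_le_sin hy.1 hy.2
    have hp := pi_pos
    rw [div_mul_eq_mul_div, div_le_iff₀ hp] at this
    linarith
  have hs : 0 ≤ sin y := sin_nonneg_of_nonneg_of_le_pi hy.1 (by linarith [hy.2, pi_pos])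
  have e : cos y ^ (2 * n + 1) * p (2 * 0) y - cos y ^ (2 * (n + 1) + 1) * p (2 * 0) y =
      cos y ^ (2 * n + 1) * sin y ^ 2 := by
    simp only [mul_zero, p_zero]
    rw [sin_sq]; ring
  rw [Pi.sub_apply, e]
  have hp : p (2 * (b + 1)) y ≤ (π / 2) ^ (2 * b + 2) * sin y ^ 2 := by
    unfold p
    have hf : (1:ℝ) ≤ (Nat.factorial (2 * (b + 1)) : ℝ) := by
      exact_mod_cast Nat.succ_le_of_lt (Nat.factorial_pos _)
    calc _ ≤ y ^ (2 * (b + 1)) := div_le_self (pow_nonneg hy.1 _) hf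
      _ ≤ (π / 2 * sin y) ^ (2 * (b + 1)) := pow_le_pow_left₀ hy.1 hj _
      _ = (π / 2) ^ (2 * b + 2) * sin y ^ (2 * b + 2) := by rw [mul_pow]; ring
      _ ≤ _ := by
        apply mul_le_mul_of_nonneg_left _ (by positivity)
        exact pow_le_pow_of_le_one hs (sin_le_one y) (by omega)
  calc _ ≤ cos y ^ (2 * n + 1) * ((π / 2) ^ (2 * b + 2) * sin y ^ 2) :=
        mul_le_mul_of_nonneg_left hp (by positivity)
    _ = _ := by ring

open Filter Topology in
lemma K_tendsto (b : ℕ) : Tendsto (K (b + 1)) atTop (𝓝 0) := by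
  obtain ⟨C, hC, h⟩ := J_bound b
  have hlim : Tendsto (fun n : ℕ => C * (1 / ((n : ℝ) + 1))) atTop (𝓝 0) := by
    simpa using tendsto_one_div_add_atTop_nhds_zero_nat.const_mul C
  refine squeeze_zero (K_nonneg _) (fun n => ?_) hlim
  have h1 := J_rec0 n
  have h2 : (2 * n + 1) * c n * J 0 n = 1 := K_zero n
  have h4 : (2 * n + 3) * J 0 (n + 1) = (2 * n + 2) * J 0 n := by
    have h3 : (2 * (n:ℝ) + 3) ≠ 0 := by positivity
    apply mul_left_cancel₀ h3
    linarith
  have h5 : J 0 n - J 0 (n + 1) = J 0 n / (2 * n + 3) := by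
    rw [eq_div_iff (by positivity)]
    linarith
  calc K (b + 1) n ≤ (2 * n + 1) * c n * (C * (J 0 n - J 0 (n + 1))) :=
        mul_le_mul_of_nonneg_left (h n) (mul_nonneg (by positivity) (c_pos n).le)
    _ = C * (((2 * n + 1) * c n * J 0 n) / (2 * n + 3)) := by rw [h5]; ring
    _ = C * (1 / (2 * n + 3)) := by rw [h2]
    _ ≤ _ := by
      apply mul_le_mul_of_nonneg_left _ hC
      apply one_div_le_one_div_of_le (by positivity)
      have : (0:ℝ) ≤ n := n.cast_nonneg
      linarith

open Filter Topology in
lemma K_tele (b n : ℕ) :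
    HasSum (fun j : ℕ => 1 / (2 * ((n + 1 + j : ℕ) : ℝ) + 1) ^ 2 * K b (n + 1 + j))
      (K (b + 1) n) := by
  rw [hasSum_iff_tendsto_nat_of_nonneg
    (fun j => mul_nonneg (by positivity) (K_nonneg _ _))]
  have e : ∀ N : ℕ, ∑ j ∈ Finset.range N,
      1 / (2 * ((n + 1 + j : ℕ) : ℝ) + 1) ^ 2 * K b (n + 1 + j) =
      K (b + 1) n - K (b + 1) (N + n) := by
    intro N
    induction N with
    | zero => simp
    | succ N ih =>
      rw [Finset.sum_range_succ, ih]
      have := K_rec b (N + n)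
      rw [show n + 1 + N = N + n + 1 by ring, show N + 1 + n = N + n + 1 by ring]
      linarith
  simp only [e]
  simpa using ((tendsto_add_atTop_iff_nat n).2 (K_tendsto b)).const_sub (K (b + 1) n)

lemma tTail_eq (b n : ℕ) : tTail b n = K b n := (K_hasSum K K_zero K_tele b n).tsum_eq

/-- arcsine coefficients -/
noncomputable def al (a n : ℕ) : ℝ := c n / (2 * n + 1) * H a n

lemma al_nonneg (a n : ℕ) : 0 ≤ al a n :=
  mul_nonneg (div_nonneg (c_pos n).le (by positivity)) (H_nonneg a n)

/-- partial sums -/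
noncomputable def G (a N : ℕ) (x : ℝ) : ℝ := ∑ n ∈ Finset.range N, al a n * sin x ^ (2 * n + 1)

/-- derivative of partial sums -/
noncomputable def G1 (a N : ℕ) (x : ℝ) : ℝ :=
  ∑ n ∈ Finset.range N, al a n * ((2 * n + 1) * sin x ^ (2 * n) * cos x)

lemma G_deriv (a N : ℕ) (x : ℝ) : HasDerivAt (G a N) (G1 a N x) x := by
  unfold G G1
  apply HasDerivAt.fun_sum
  intro n _
  refine hd_congr (((hasDerivAt_sin x).pow (2 * n + 1)).const_mul (al a n)) ?_
  simp

/-- lower-order partial sums -/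
noncomputable def Gp (a N : ℕ) (x : ℝ) : ℝ :=
  match a with
  | 0 => 0
  | a + 1 => G a N x

/-- H of predecessor -/
noncomputable def Hp (a N : ℕ) : ℝ :=
  match a with
  | 0 => 0
  | a + 1 => H a N

lemma H_succ (a N : ℕ) : H a (N + 1) = H a N + 1 / (2 * (N : ℝ) + 1) ^ 2 * Hp a N := by
  cases a with
  | zero => simp [H, Hp]
  | succ a => simp only [H, Hp, Finset.sum_range_succ]

lemma Gp_succ (a N : ℕ) (x : ℝ) :
    Gp a (N + 1) x = Gp a N x + c N / (2 * N + 1) * Hp a N * sin x ^ (2 * N + 1) := by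
  cases a with
  | zero => simp [Gp, Hp]
  | succ a => simp only [Gp, G, Hp, Finset.sum_range_succ, al]

lemma G1_deriv (a N : ℕ) (x : ℝ) :
    HasDerivAt (G1 a N) (Gp a N x - 2 * N * c N * H a N * sin x ^ (2 * N - 1)) x := by
  induction N with
  | zero =>
    have : G1 a 0 = fun _ => 0 := by funext x; simp [G1]
    rw [this]
    have e : Gp a 0 x = 0 := by cases a <;> simp [Gp, G]
    simpa [e] using hasDerivAt_const x (0:ℝ)
  | succ N ih =>
    have e : G1 a (N + 1) = fun x => G1 a N x + al a N * ((2 * N + 1) * sin x ^ (2 * N) * cos x) := by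
      funext x; simp [G1, Finset.sum_range_succ]
    rw [e]
    refine hd_congr (ih.add (((((hasDerivAt_sin x).pow (2 * N)).const_mul (2 * (N:ℝ) + 1)).mul
      (hasDerivAt_cos x)).const_mul (al a N))) ?_
    have h2 := c_succ N
    have hs := sin_sq x
    have h3 : (2 * (N:ℝ) + 1) ≠ 0 := by positivity
    have h4 : c (N + 1) = c N * (2 * N + 1) / (2 * N + 2) := rfl
    rw [Gp_succ, H_succ, h4, show 2 * (N + 1) - 1 = 2 * N + 1 by omega]
    simp only [al, Pi.pow_apply]
    push_cast
    have h5 : (2 * (N:ℝ)) * sin x ^ (2 * N - 1) * (cos x * cos x) =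
        2 * N * sin x ^ (2 * N - 1) - 2 * N * sin x ^ (2 * N + 1) := by
      cases N with
      | zero => simp
      | succ M =>
        rw [show 2 * (M + 1) - 1 = 2 * M + 1 by omega]
        rw [show cos x * cos x = 1 - sin x ^ 2 by rw [hs]; ring]
        ring
    have h6 : (2 * (N:ℝ) + 2) ≠ 0 := by positivity
    have h7 : c N / (2 * ↑N + 1) * H a N * ((2 * (N:ℝ) + 1) * (2 * (N:ℝ) * sin x ^ (2 * N - 1) * cos x) * cos x +
        (2 * (N:ℝ) + 1) * sin x ^ (2 * N) * -sin x) = c N * H a N * 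
        (2 * N * sin x ^ (2 * N - 1) - 2 * N * sin x ^ (2 * N + 1) - sin x ^ (2 * N + 1)) := by
      rw [← h5]; field_simp; ring
    rw [h7]
    field_simp
    ring

lemma second_bound {E E1 E2 : ℝ → ℝ} (hE : ∀ x, HasDerivAt E (E1 x) x)
    (hE1 : ∀ x, HasDerivAt E1 (E2 x) x) (h0 : E 0 = 0) (h1 : E1 0 = 0) {θ M : ℝ}
    (hM0 : 0 ≤ M) (hM : ∀ x ∈ Set.Icc 0 θ, |E2 x| ≤ M) :
    ∀ x ∈ Set.Icc 0 θ, |E x| ≤ M * θ ^ 2 := by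
  have b1 : ∀ x ∈ Set.Icc 0 θ, |E1 x| ≤ M * θ := by
    intro x hx
    have := norm_image_sub_le_of_norm_deriv_le_segment' (f := E1) (a := 0) (b := θ) (C := M)
      (fun y _ => (hE1 y).hasDerivWithinAt) (fun y hy => hM y ⟨hy.1, hy.2.le⟩) x hx
    rw [h1, sub_zero, sub_zero] at this
    exact this.trans (mul_le_mul_of_nonneg_left hx.2 hM0)
  intro x hx
  have := norm_image_sub_le_of_norm_deriv_le_segment' (f := E) (a := 0) (b := θ) (C := M * θ)
      (fun y _ => (hE y).hasDerivWithinAt) (fun y hy => b1 y ⟨hy.1, hy.2.le⟩) x hx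
  rw [h0, sub_zero, sub_zero] at this
  have ht : 0 ≤ θ := hx.1.trans hx.2
  calc |E x| ≤ M * θ * x := this
    _ ≤ M * θ * θ := mul_le_mul_of_nonneg_left hx.2 (by positivity)
    _ = _ := by ring

open Filter Topology in
lemma R_small (a : ℕ) {θ : ℝ} (h0 : 0 ≤ θ) (hθ : θ < π / 2) {ε : ℝ} (hε : 0 < ε) :
    ∀ᶠ N : ℕ in atTop, ∀ x ∈ Set.Icc 0 θ,
      |2 * N * c N * H a N * sin x ^ (2 * N - 1)| ≤ ε := by
  have hs0 : 0 ≤ sin θ := sin_nonneg_of_nonneg_of_le_pi h0 (by linarith [pi_pos])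
  have hs1 : sin θ < 1 := by
    rw [← sin_pi_div_two]
    exact sin_lt_sin_of_lt_of_le_pi_div_two (by linarith [pi_pos]) le_rfl hθ
  have hl := (tendsto_pow_const_mul_const_pow_of_abs_lt_one (a + 1)
    (show |sin θ| < 1 by rwa [abs_of_nonneg hs0])).const_mul 2
  rw [mul_zero] at hl
  filter_upwards [hl.eventually (gt_mem_nhds hε), eventually_ge_atTop 1] with N hN hN1 x hx
  have hx0 : 0 ≤ sin x := sin_nonneg_of_nonneg_of_le_pi hx.1 (by linarith [pi_pos, hx.2])
  have hx1 : sin x ≤ sin θ :=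
    sin_le_sin_of_le_of_le_pi_div_two (by linarith [pi_pos, hx.1]) hθ.le hx.2
  have hc := (c_pos N).le
  have hH := H_nonneg a N
  rw [abs_of_nonneg (by positivity)]
  calc 2 * N * c N * H a N * sin x ^ (2 * N - 1)
      ≤ 2 * N * 1 * (N:ℝ) ^ a * sin θ ^ N := by
        have : sin x ^ (2 * N - 1) ≤ sin θ ^ N :=
          (pow_le_pow_left₀ hx0 hx1 _).trans (pow_le_pow_of_le_one hs0 hs1.le (by omega))
        have := c_le N
        have := H_le a N
        gcongr
    _ = 2 * ((N:ℝ) ^ (a + 1) * sin θ ^ N) := by ring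
    _ ≤ ε := hN.le

lemma G1_zero (a N : ℕ) : G1 a (N + 1) 0 = H a 0 := by
  unfold G1
  rw [Finset.sum_range_succ']
  simp [al, c]

open Filter Topology in
lemma G_unif (a : ℕ) {θ : ℝ} (h0 : 0 ≤ θ) (hθ : θ < π / 2) {ε : ℝ} (hε : 0 < ε) :
    ∀ᶠ N : ℕ in atTop, ∀ x ∈ Set.Icc 0 θ, |p (2 * a + 1) x - G a N x| ≤ ε := by
  induction a generalizing ε with
  | zero =>
    have hδ : 0 < ε / (θ ^ 2 + 1) := by positivity
    filter_upwards [R_small 0 h0 hθ hδ, eventually_ge_atTop 1] with N hN hN1 x hx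
    obtain ⟨N, rfl⟩ : ∃ M, N = M + 1 := ⟨N - 1, by omega⟩
    have := second_bound (E := fun x => p 1 x - G 0 (N + 1) x)
      (fun x => (p_deriv 0 x).sub (G_deriv 0 (N + 1) x))
      (fun x => by
        have e : p 0 = fun _ => (1:ℝ) := funext p_zero
        rw [e]
        exact (hasDerivAt_const x (1:ℝ)).sub (G1_deriv 0 (N + 1) x))
      (by simp [p_one, G]) (by simp [p_zero, G1_zero, H]) hδ.le
      (fun x hx => by simpa [Gp] using hN x hx) x hx
    refine this.trans ?_
    rw [div_mul_eq_mul_div, div_le_iff₀ (by positivity)]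
    nlinarith
  | succ a ih =>
    have hδ : 0 < ε / (2 * (θ ^ 2 + 1)) := by positivity
    filter_upwards [R_small (a + 1) h0 hθ hδ, ih hδ, eventually_ge_atTop 1] with N hN hN' hN1 x hx
    obtain ⟨N, rfl⟩ : ∃ M, N = M + 1 := ⟨N - 1, by omega⟩
    have := second_bound (E := fun x => p (2 * a + 3) x - G (a + 1) (N + 1) x)
      (M := ε / (2 * (θ ^ 2 + 1)) + ε / (2 * (θ ^ 2 + 1)))
      (fun x => (p_deriv (2 * a + 2) x).sub (G_deriv (a + 1) (N + 1) x))
      (fun x => (p_deriv (2 * a + 1) x).sub (G1_deriv (a + 1) (N + 1) x))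
      (by simp [p, G]) (by simp [p, G1_zero, H]) (by positivity)
      (fun x hx => by
        have h1 := abs_le.1 (hN x hx)
        have h2 := abs_le.1 (hN' x hx)
        simp only [Gp]
        rw [abs_le]
        constructor <;> linarith) x hx
    refine this.trans ?_
    rw [← two_mul, show 2 * (ε / (2 * (θ ^ 2 + 1))) * θ ^ 2 = ε * θ ^ 2 / (θ ^ 2 + 1) by
      field_simp, div_le_iff₀ (by positivity)]
    nlinarith

open Filter Topology in
lemma arcsin_hasSum (a : ℕ) {x : ℝ} (h0 : 0 ≤ x) (hx : x < π / 2) :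
    HasSum (fun n => al a n * sin x ^ (2 * n + 1)) (p (2 * a + 1) x) := by
  have hs0 : 0 ≤ sin x := sin_nonneg_of_nonneg_of_le_pi h0 (by linarith [pi_pos])
  rw [hasSum_iff_tendsto_nat_of_nonneg (fun n => mul_nonneg (al_nonneg a n) (by positivity)),
    Metric.tendsto_nhds]
  intro ε hε
  filter_upwards [G_unif a h0 hx (half_pos hε)] with N hN
  have := hN x ⟨h0, le_rfl⟩
  rw [dist_comm, Real.dist_eq]
  exact lt_of_le_of_lt this (by linarith)

lemma term_integral (b n : ℕ) :
    ∫ x in (0:ℝ)..(π / 2), sin x ^ (2 * n) * cos x * p (2 * b + 1) (π / 2 - x) =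
      J b n / (2 * n + 1) := by
  have h := intervalIntegral.integral_comp_sub_left
    (fun y => cos y ^ (2 * n) * sin y * p (2 * b + 1) y) (a := 0) (b := π / 2) (π / 2)
  simp only [cos_pi_div_two_sub, sin_pi_div_two_sub, sub_self, sub_zero] at h
  rw [h]
  have d : ∀ y : ℝ, HasDerivAt (fun y => cos y ^ (2 * n + 1) * p (2 * b + 1) y)
      (cos y ^ (2 * n + 1) * p (2 * b) y -
        (2 * n + 1) * (cos y ^ (2 * n) * sin y * p (2 * b + 1) y)) y := by
    intro y
    refine hd_congr (((hasDerivAt_cos y).pow (2 * n + 1)).mul (p_deriv (2 * b) y)) ?_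
    simp; ring
  have h2 := intervalIntegral.integral_eq_sub_of_hasDerivAt (a := 0) (b := π / 2)
    (fun y _ => d y) (Continuous.intervalIntegrable (by fun_prop) _ _)
  rw [intervalIntegral.integral_sub (Continuous.intervalIntegrable (by fun_prop) _ _)
    (Continuous.intervalIntegrable (by fun_prop) _ _), intervalIntegral.integral_const_mul] at h2
  simp [p_zero_succ] at h2
  rw [eq_div_iff (by positivity)]
  unfold J
  linarith

lemma main_integrable (a b : ℕ) : IntervalIntegrable
    (fun x => p (2 * a + 1) x * (p (2 * b + 1) (π / 2 - x) * cot x)) MeasureTheory.volume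
    0 (π / 2) := by
  have hc : ContinuousOn (fun x : ℝ => x ^ (2 * a) / (Nat.factorial (2 * a + 1) : ℝ) *
      p (2 * b + 1) (π / 2 - x) * (cos x / sinc x)) (Set.uIcc 0 (π / 2)) := by
    apply ContinuousOn.mul (by fun_prop)
    apply ContinuousOn.div (by fun_prop) continuous_sinc.continuousOn
    intro x hx
    rw [Set.uIcc_of_le (by positivity)] at hx
    rcases eq_or_lt_of_le hx.1 with h | h
    · simp [← h]
    · rw [sinc_of_ne_zero h.ne']
      exact (div_pos (sin_pos_of_pos_of_lt_pi h (by linarith [hx.2, pi_pos])) h).ne'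
  refine (hc.intervalIntegrable).congr ?_
  intro x hx
  rw [Set.uIoc_of_le (by positivity)] at hx
  have h1 := hx.1
  have hs := sin_pos_of_pos_of_lt_pi h1 (by linarith [hx.2, pi_pos])
  simp only [sinc_of_ne_zero h1.ne', cot_eq_cos_div_sin]
  unfold p
  field_simp
  ring

lemma main_sum (a b : ℕ) : HasSum (fun n => al a n * (J b n / (2 * n + 1)))
    (∫ x in (0:ℝ)..(π / 2), p (2 * a + 1) x * (p (2 * b + 1) (π / 2 - x) * cot x)) := by
  have key : ∀ x ∈ Set.uIoc 0 (π / 2),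
      HasSum (fun n : ℕ => al a n * (sin x ^ (2 * n) * cos x * p (2 * b + 1) (π / 2 - x)))
      (p (2 * a + 1) x * (p (2 * b + 1) (π / 2 - x) * cot x)) := by
    intro x hx
    rw [Set.uIoc_of_le (by positivity)] at hx
    rcases eq_or_lt_of_le hx.2 with h | h
    · subst h
      simpa [p_zero_succ] using (hasSum_zero : HasSum (fun _ : ℕ => (0:ℝ)) 0)
    · have hs := sin_pos_of_pos_of_lt_pi hx.1 (by linarith [hx.2, pi_pos])
      refine hs_congr ((arcsin_hasSum a hx.1.le h).mul_right (p (2 * b + 1) (π / 2 - x) * cot x)) ?_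
      intro n
      rw [cot_eq_cos_div_sin]
      field_simp
      ring
  have := intervalIntegral.hasSum_integral_of_dominated_convergence (μ := MeasureTheory.volume)
    (a := 0) (b := π / 2)
    (F := fun (n : ℕ) x => al a n * (sin x ^ (2 * n) * cos x * p (2 * b + 1) (π / 2 - x)))
    (f := fun x => p (2 * a + 1) x * (p (2 * b + 1) (π / 2 - x) * cot x))
    (fun (n : ℕ) x => al a n * (sin x ^ (2 * n) * cos x * p (2 * b + 1) (π / 2 - x)))
    (fun n => Continuous.aestronglyMeasurable (by fun_prop))
    (fun n => Filter.Eventually.of_forall fun x hx => by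
      rw [Set.uIoc_of_le (by positivity)] at hx
      have hs := sin_pos_of_pos_of_lt_pi hx.1 (by linarith [hx.2, pi_pos])
      have hcs : 0 ≤ cos x := cos_nonneg_of_mem_Icc ⟨by linarith [hx.1, pi_pos], hx.2⟩
      have hp : 0 ≤ p (2 * b + 1) (π / 2 - x) := by
        have : 0 ≤ π / 2 - x := by linarith [hx.2]
        unfold p; positivity
      have := al_nonneg a n
      rw [Real.norm_of_nonneg (by positivity)])
    (Filter.Eventually.of_forall fun x hx => (key x hx).summable)
    ((main_integrable a b).congr fun x hx => ((key x hx).tsum_eq).symm)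
    (Filter.Eventually.of_forall fun x hx => key x hx)
  simpa only [intervalIntegral.integral_const_mul, term_integral] using this

end TCot

theorem T_eq_cot_integral (a b : ℕ) :
    T a b = π ^ (2 * b + 1) /
        (2 ^ (2 * b + 1) * (Nat.factorial (2 * a + 1)) * (Nat.factorial (2 * b + 1))) *
      ∫ x in (0:ℝ)..(π / 2),
        x ^ (2 * a + 1) * (1 - 2 * x / π) ^ (2 * b + 1) * Real.cot x := by
  have h := (TCot.main_sum a b).tsum_eq
  have e1 : T a b = ∑' n : ℕ, TCot.al a n * (TCot.J b n / (2 * n + 1)) := by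
    unfold T
    apply tsum_congr
    intro n
    rw [TCot.tHead_eq, TCot.tTail_eq, TCot.al, TCot.K]
    have : (2 * (n:ℝ) + 1) ≠ 0 := by positivity
    field_simp
  rw [e1, h, ← intervalIntegral.integral_const_mul]
  apply intervalIntegral.integral_congr
  intro x _
  have hp := pi_pos
  have e2 : 1 - 2 * x / π = (2 / π) * (π / 2 - x) := by field_simp
  have e3 : π ^ (2 * b + 1) / 2 ^ (2 * b + 1) * (2 / π) ^ (2 * b + 1) = 1 := by
    rw [← div_pow, ← mul_pow]
    field_simp
    simp
  simp only [TCot.p]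
  rw [e2, mul_pow]
  have hA : (Nat.factorial (2 * a + 1) : ℝ) ≠ 0 := by positivity
  have hB : (Nat.factorial (2 * b + 1) : ℝ) ≠ 0 := by positivity
  rw [show π ^ (2 * b + 1) / (2 ^ (2 * b + 1) * (Nat.factorial (2 * a + 1) : ℝ) *
      (Nat.factorial (2 * b + 1) : ℝ)) * (x ^ (2 * a + 1) *
      ((2 / π) ^ (2 * b + 1) * (π / 2 - x) ^ (2 * b + 1)) * cot x) =
      (π ^ (2 * b + 1) / 2 ^ (2 * b + 1) * (2 / π) ^ (2 * b + 1)) *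
      (x ^ (2 * a + 1) / (Nat.factorial (2 * a + 1) : ℝ) *
      ((π / 2 - x) ^ (2 * b + 1) / (Nat.factorial (2 * b + 1) : ℝ) * cot x)) by
    simp only [div_eq_mul_inv, mul_inv]; ring, e3, one_mul]
end
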